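/- For every τ ∈ ℝ, τ ≠ 0, and every x ∈ (0,1), the imaginary part of ζ(x+iτ)/(x+iτ) equals -τ/((1-x)² + τ²) + ∫₀^∞ {exp(u)} exp(-x·u) sin(τ·u) du. -/

import Mathlib

open MeasureTheory Complex Real

noncomputable def zfr (t : ℝ) : ℂ := (Set.Ioi (1 : ℝ)).indicator (fun t => ((Int.fract t : ℝ) : ℂ)) t

lemma zfr_norm (t : ℝ) : ‖zfr t‖ ≤ 1 := by
  unfold zfr
  refine (norm_indicator_le_norm_self _ _).trans ?_
  rw [Complex.norm_real, Real.norm_of_nonneg (Int.fract_nonneg t)]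
  exact (Int.fract_lt_one t).le

lemma zfr_meas : Measurable zfr := by
  unfold zfr
  exact (Complex.measurable_ofReal.comp measurable_fract).indicator measurableSet_Ioi

lemma zfr_loc : LocallyIntegrableOn zfr (Set.Ioi 0) := by
  apply LocallyIntegrable.locallyIntegrableOn
  refine (locallyIntegrable_const (1 : ℝ)).mono zfr_meas.aestronglyMeasurable ?_
  filter_upwards with t
  simpa using zfr_norm t

lemma zfr_top : zfr =O[Filter.atTop] (fun x : ℝ => x ^ (-(0 : ℝ))) := by
  refine Asymptotics.IsBigO.of_bound 1 ?_
  filter_upwards with t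
  simpa using zfr_norm t

lemma zfr_bot (b : ℝ) : zfr =O[nhdsWithin 0 (Set.Ioi 0)] (fun x : ℝ => x ^ (-b)) := by
  refine Asymptotics.IsBigO.of_bound 1 ?_
  have : Set.Iio (1 : ℝ) ∈ nhdsWithin (0 : ℝ) (Set.Ioi 0) :=
    mem_nhdsWithin_of_mem_nhds (Iio_mem_nhds one_pos)
  filter_upwards [this] with t ht
  have : zfr t = 0 := by
    unfold zfr
    exact Set.indicator_of_notMem (by simpa using (le_of_lt ht)) _
  rw [this]
  simp

lemma zfr_conv {s : ℂ} (hs : 0 < s.re) : MellinConvergent zfr (-s) :=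
  mellinConvergent_of_isBigO_rpow (a := 0) (b := -s.re - 1) zfr_loc zfr_top (by simpa using hs)
    (zfr_bot _) (by simp)

lemma zfr_diff {s : ℂ} (hs : 0 < s.re) : DifferentiableAt ℂ (fun s => mellin zfr (-s)) s := by
  have : DifferentiableAt ℂ (mellin zfr) (-s) :=
    mellin_differentiableAt_of_isBigO_rpow (a := 0) (b := -s.re - 1) zfr_loc zfr_top
      (by simpa using hs) (zfr_bot _) (by simp)
  exact this.comp s differentiableAt_id.neg

lemma zfr_integrand (s : ℂ) : (fun t : ℝ => (t : ℂ) ^ (-s - 1) • zfr t) =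
    (Set.Ioi (1 : ℝ)).indicator (fun t : ℝ => ((Int.fract t : ℝ) : ℂ) * (t : ℂ) ^ (-s - 1)) := by
  ext t
  unfold zfr
  by_cases h : t ∈ Set.Ioi (1 : ℝ)
  · simp [Set.indicator_of_mem h, mul_comm]
  · simp [Set.indicator_of_notMem h]

lemma Ioi_inter_aux : Set.Ioi (0 : ℝ) ∩ Set.Ioi 1 = Set.Ioi 1 :=
  Set.inter_eq_right.mpr (Set.Ioi_subset_Ioi zero_le_one)

lemma zfr_mellin (s : ℂ) : mellin zfr (-s) =
    ∫ t in Set.Ioi (1 : ℝ), ((Int.fract t : ℝ) : ℂ) * (t : ℂ) ^ (-s - 1) := by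
  rw [mellin, zfr_integrand, setIntegral_indicator measurableSet_Ioi, Ioi_inter_aux]

lemma zfr_intble {s : ℂ} (hs : 0 < s.re) : IntegrableOn
    (fun t : ℝ => ((Int.fract t : ℝ) : ℂ) * (t : ℂ) ^ (-s - 1)) (Set.Ioi 1) := by
  have := zfr_conv hs
  rw [MellinConvergent, zfr_integrand, integrableOn_indicator_iff measurableSet_Ioi,
    Set.inter_comm, Ioi_inter_aux] at this
  exact this

lemma zeta_gt {s : ℂ} (hs : 1 < s.re) :
    riemannZeta s = s * (1 / (s - 1) - mellin zfr (-s)) := by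
  have hs1 : s - 1 ≠ 0 := by
    intro h
    rw [sub_eq_zero.mp h] at hs
    simp at hs
  rw [← LSeries_one_eq_riemannZeta hs, LSeries_eq_mul_integral 1 zero_le_one hs
    (LSeriesSummable_one_iff.mpr hs)]
  · congr 1
    have h1 : (∫ t in Set.Ioi (1 : ℝ), (t : ℂ) ^ (-s)) = 1 / (s - 1) := by
      rw [integral_Ioi_cpow_of_lt (by simpa using hs) one_pos]
      have : -s + 1 ≠ 0 := by
        intro h; apply hs1; linear_combination -h
      simp
      rw [neg_div, ← one_div, ← div_neg, one_div, one_div]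
      congr 1
      ring
    rw [zfr_mellin, ← h1, ← integral_sub (integrableOn_Ioi_cpow_of_lt (by simpa using hs) one_pos)
      (zfr_intble (by linarith))]
    refine setIntegral_congr_fun measurableSet_Ioi fun t ht => ?_
    have ht0 : (0 : ℝ) < t := zero_lt_one.trans ht
    have htc : (t : ℂ) ≠ 0 := by exact_mod_cast ht0.ne'
    have e1 : (t : ℂ) ^ (-s) = t * (t : ℂ) ^ (-s - 1) := by
      rw [cpow_sub _ _ htc, cpow_one]; field_simp
    have e2 : ((⌊t⌋₊ : ℕ) : ℂ) = (t : ℂ) - ((Int.fract t : ℝ) : ℂ) := by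
      rw [← Complex.ofReal_sub, ← Complex.ofReal_natCast, Int.self_sub_fract,
        ← natCast_floor_eq_intCast_floor ht0.le]
    simp only [Pi.one_apply, Finset.sum_const, Nat.card_Icc, add_tsub_cancel_right, nsmul_eq_mul,
      mul_one]
    rw [e1, e2, neg_add']
    ring
  · refine Asymptotics.IsBigO.of_bound 1 ?_
    filter_upwards with n
    simp

lemma zeta_pos {s : ℂ} (hs : 0 < s.re) (h1 : s ≠ 1) :
    riemannZeta s = s * (1 / (s - 1) - mellin zfr (-s)) := by
  have hopen : IsOpen {z : ℂ | 0 < z.re} := isOpen_lt continuous_const continuous_re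
  have hA : AnalyticOnNhd ℂ riemannZeta₁ {z : ℂ | 0 < z.re} :=
    differentiable_riemannZeta₁.differentiableOn.analyticOnNhd hopen
  have hB : AnalyticOnNhd ℂ (fun s => s * (1 - (s - 1) * mellin zfr (-s))) {z : ℂ | 0 < z.re} := by
    refine DifferentiableOn.analyticOnNhd (fun z hz => ?_) hopen
    have := zfr_diff (s := z) hz
    refine DifferentiableAt.differentiableWithinAt ?_
    fun_prop
  have key : ∀ z : ℂ, z ≠ 1 → riemannZeta₁ z = (z - 1) * riemannZeta z := by
    intro z hz
    rw [riemannZeta_eq_inv_sub_mul hz, mul_inv_cancel_left₀ (sub_ne_zero.mpr hz)]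
  have hE := hA.eqOn_of_preconnected_of_eventuallyEq hB
    (convex_halfSpace_re_gt 0).isPreconnected (z₀ := 2) (by simp) (by
      have : {z : ℂ | 1 < z.re} ∈ nhds (2 : ℂ) :=
        (isOpen_lt continuous_const continuous_re).mem_nhds (by simp)
      filter_upwards [this] with z hz
      have hz1 : z ≠ 1 := by
        rintro rfl
        simp at hz
      have := sub_ne_zero.mpr hz1
      rw [key z hz1, zeta_gt hz]
      field_simp) hs
  have h2 := sub_ne_zero.mpr h1
  rw [riemannZeta_eq_inv_sub_mul h1, hE]
  field_simp

lemma mellin_exp_aux (s : ℂ) (u : ℝ) : Real.exp u • (((Int.fract (Real.exp u) : ℝ) : ℂ) *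
    ((Real.exp u : ℝ) : ℂ) ^ (-s - 1)) = ((Int.fract (Real.exp u) : ℝ) : ℂ) * cexp (-s * u) := by
  have hne : ((Real.exp u : ℝ) : ℂ) ≠ 0 := by exact_mod_cast (Real.exp_pos u).ne'
  rw [cpow_def_of_ne_zero hne, ← Complex.ofReal_log (Real.exp_pos u).le, Real.log_exp,
    Complex.real_smul, mul_left_comm, Complex.ofReal_exp, ← Complex.exp_add]
  congr 2
  ring

lemma mellin_exp (s : ℂ) : mellin zfr (-s) =
    ∫ u in Set.Ioi (0 : ℝ), ((Int.fract (Real.exp u) : ℝ) : ℂ) * cexp (-s * u) := by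
  rw [zfr_mellin]
  have := integral_comp_exp_Ioi
    (fun t : ℝ => ((Int.fract t : ℝ) : ℂ) * (t : ℂ) ^ (-s - 1)) 0
  rw [Real.exp_zero] at this
  rw [← this]
  congr 1
  ext u
  exact mellin_exp_aux s u

theorem im_zeta_div_s (τ : ℝ) (hτ : τ ≠ 0) (x : ℝ) (hx : x ∈ Set.Ioo (0 : ℝ) 1) :
    (riemannZeta (x + τ * Complex.I) / (x + τ * Complex.I)).im =
      -τ / ((1 - x) ^ 2 + τ ^ 2) +
        ∫ u in Set.Ioi (0 : ℝ),
          Int.fract (Real.exp u) * Real.exp (-x * u) * Real.sin (τ * u) := by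
  set s : ℂ := x + τ * Complex.I with hs
  have hre : s.re = x := by simp [hs]
  have him : s.im = τ := by simp [hs]
  have hpos : 0 < s.re := by rw [hre]; exact hx.1
  have h1 : s ≠ 1 := by
    intro h
    apply hτ
    rw [← him, h, one_im]
  have h0 : s ≠ 0 := by
    intro h
    rw [h] at hpos
    simp at hpos
  rw [zeta_pos hpos h1, mul_div_cancel_left₀ _ h0, sub_im]
  have hI : IntegrableOn (fun u : ℝ => ((Int.fract (Real.exp u) : ℝ) : ℂ) * cexp (-s * u))
      (Set.Ioi 0) := by
    have := (integrableOn_comp_exp_Ioi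
      (fun t : ℝ => ((Int.fract t : ℝ) : ℂ) * (t : ℂ) ^ (-s - 1)) 0).mpr
      (by rw [Real.exp_zero]; exact zfr_intble hpos)
    simpa only [mellin_exp_aux] using this
  rw [mellin_exp, sub_eq_add_neg]
  congr 1
  · rw [one_div, inv_im, normSq_apply]
    simp only [sub_re, sub_im, one_re, one_im, hre, him, sub_zero]
    congr 1
    ring
  · have h := integral_im (𝕜 := ℂ) hI
    have h' : (∫ u in Set.Ioi (0 : ℝ), ((Int.fract (Real.exp u) : ℝ) : ℂ) * cexp (-s * u)).im
      = ∫ u in Set.Ioi (0 : ℝ), (((Int.fract (Real.exp u) : ℝ) : ℂ) * cexp (-s * u)).im := h.symm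
    rw [h', ← integral_neg]
    congr 1
    ext u
    rw [im_ofReal_mul, exp_im]
    simp only [mul_re, mul_im, neg_re, neg_im, ofReal_re, ofReal_im, hre, him, mul_zero, sub_zero,
      zero_add, neg_mul, Real.sin_neg]
    simp
    ring
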